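/- Let B ∈ ℝ^{m×n} be any real matrix, and let A ∈ ℝ^{(m+3n)×3n} be the block matrix whose blocks, from top to bottom, are [⅓B ⅓B ⅓B], [I_n I_n −I_n], [I_n −I_n I_n], and [−I_n I_n I_n]. If x ∈ {0,1}^{3n} satisfies ‖A((1/2)·1 − x)‖_∞ < 3/2, where x is the concatenation of x¹, x², x³ ∈ {0,1}ⁿ, then x¹ = x² = x³ and ‖B((1/2)·1 − x¹)‖_∞ < 3/2. -/

import Mathlib

/-- The block matrix `A` with row blocks `[⅓B ⅓B ⅓B]`, `[I I -I]`, `[I -I I]`, `[-I I I]`. -/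
noncomputable def Amat {m n : ℕ} (B : Matrix (Fin m) (Fin n) ℝ) :
    Matrix (Fin m ⊕ (Fin n ⊕ Fin n ⊕ Fin n)) (Fin n ⊕ Fin n ⊕ Fin n) ℝ :=
  Matrix.of fun r c =>
    match r with
    | Sum.inl j => (1 / 3) * B j (Sum.elim id (Sum.elim id id) c)
    | Sum.inr (Sum.inl k) =>
        Sum.elim (fun i => if k = i then (1 : ℝ) else 0)
          (Sum.elim (fun i => if k = i then (1 : ℝ) else 0)
            (fun i => if k = i then (-1 : ℝ) else 0)) c
    | Sum.inr (Sum.inr (Sum.inl k)) =>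
        Sum.elim (fun i => if k = i then (1 : ℝ) else 0)
          (Sum.elim (fun i => if k = i then (-1 : ℝ) else 0)
            (fun i => if k = i then (1 : ℝ) else 0)) c
    | Sum.inr (Sum.inr (Sum.inr k)) =>
        Sum.elim (fun i => if k = i then (-1 : ℝ) else 0)
          (Sum.elim (fun i => if k = i then (1 : ℝ) else 0)
            (fun i => if k = i then (1 : ℝ) else 0)) c

/-! The signed sums `a + b - c`, `a - b + c`, `-a + b + c` of integers have the same parity, and the
identity blocks of `A` place each of them strictly between `-1` and `2`, that is in `{0, 1}`. Hence
all three sums are equal, which forces `a = b = c`. So the three parts of `x` coincide, and then the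
rows `[⅓B ⅓B ⅓B]` of `A` compute exactly `B((1/2)·1 - x¹)`. -/

open Matrix

theorem norm_sumElim {ι κ E : Type*} [Fintype ι] [Fintype κ] [SeminormedAddCommGroup E]
    (f : ι → E) (g : κ → E) : ‖Sum.elim f g‖ = max ‖f‖ ‖g‖ := by
  simp only [Pi.norm_def, ← Finset.univ_disjSum_univ, Finset.sup_disjSum, Sum.elim_inl,
    Sum.elim_inr, NNReal.coe_max]

section IntegerEntries

variable {R : Type*} [Field R] [LinearOrder R] [IsStrictOrderedRing R]

theorem eq_zero_or_one_of_abs_half_sub_intCast_lt {k : ℤ} (h : |1 / 2 - (k : R)| < 3 / 2) :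
    k = 0 ∨ k = 1 := by
  obtain ⟨hlower, hupper⟩ := abs_lt.mp h
  have hk_lt : k < 2 := by exact_mod_cast (by linarith : (k : R) < 2)
  have hk_gt : -1 < k := by exact_mod_cast (by linarith : (-1 : R) < k)
  omega

theorem eq_and_eq_of_abs_signed_sums_half_sub_lt {a b c : R}
    (ha : a ∈ Set.range (Int.cast : ℤ → R)) (hb : b ∈ Set.range (Int.cast : ℤ → R))
    (hc : c ∈ Set.range (Int.cast : ℤ → R))
    (h₁ : |(1 / 2 - a) + (1 / 2 - b) - (1 / 2 - c)| < 3 / 2)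
    (h₂ : |(1 / 2 - a) - (1 / 2 - b) + (1 / 2 - c)| < 3 / 2)
    (h₃ : |-(1 / 2 - a) + (1 / 2 - b) + (1 / 2 - c)| < 3 / 2) :
    a = b ∧ b = c := by
  obtain ⟨a, rfl⟩ := ha
  obtain ⟨b, rfl⟩ := hb
  obtain ⟨c, rfl⟩ := hc
  have hab : a + b - c = 0 ∨ a + b - c = 1 :=
    eq_zero_or_one_of_abs_half_sub_intCast_lt (R := R) (by convert h₁ using 2; push_cast; ring)
  have hac : a - b + c = 0 ∨ a - b + c = 1 :=
    eq_zero_or_one_of_abs_half_sub_intCast_lt (R := R) (by convert h₂ using 2; push_cast; ring)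
  have hbc : -a + b + c = 0 ∨ -a + b + c = 1 :=
    eq_zero_or_one_of_abs_half_sub_intCast_lt (R := R) (by convert h₃ using 2; push_cast; ring)
  have heq : a = b ∧ b = c := by omega
  exact_mod_cast heq

end IntegerEntries

section BlockMatrix

variable {m n : ℕ} (B : Matrix (Fin m) (Fin n) ℝ)

theorem Amat_eq_fromRows :
    Amat B =
      fromRows (fromCols ((1 / 3 : ℝ) • B) (fromCols ((1 / 3 : ℝ) • B) ((1 / 3 : ℝ) • B)))
        (fromRows (fromCols 1 (fromCols 1 (-1)))
          (fromRows (fromCols 1 (fromCols (-1) 1)) (fromCols (-1) (fromCols 1 1)))) := by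
  ext (_ | _ | _ | _) (_ | _ | _) <;> simp [Amat, one_apply, neg_ite]

theorem Amat_mulVec_sumElim (u v w : Fin n → ℝ) :
    Amat B *ᵥ Sum.elim u (Sum.elim v w) =
      Sum.elim ((1 / 3 : ℝ) • B *ᵥ (u + v + w))
        (Sum.elim (u + v - w) (Sum.elim (u - v + w) (-u + v + w))) := by
  simp only [Amat_eq_fromRows, fromRows_mulVec, fromCols_mulVec_sumElim, smul_mulVec, neg_mulVec,
    one_mulVec, mulVec_add, smul_add, add_assoc, sub_eq_add_neg]

theorem norm_Amat_mulVec_sumElim_lt_iff (u v w : Fin n → ℝ) {r : ℝ} :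
    ‖Amat B *ᵥ Sum.elim u (Sum.elim v w)‖ < r ↔
      ‖(1 / 3 : ℝ) • B *ᵥ (u + v + w)‖ < r ∧
        ‖u + v - w‖ < r ∧ ‖u - v + w‖ < r ∧ ‖-u + v + w‖ < r := by
  simp only [Amat_mulVec_sumElim, norm_sumElim, max_lt_iff]

end BlockMatrix

theorem reduction_soundness_step_general {m n : ℕ} (B : Matrix (Fin m) (Fin n) ℝ)
    {x1 x2 x3 : Fin n → ℝ} (hx1 : ∀ i, x1 i ∈ Set.range (Int.cast : ℤ → ℝ))
    (hx2 : ∀ i, x2 i ∈ Set.range (Int.cast : ℤ → ℝ))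
    (hx3 : ∀ i, x3 i ∈ Set.range (Int.cast : ℤ → ℝ))
    (h : ‖Amat B *ᵥ ((fun _ => (1 : ℝ) / 2) - Sum.elim x1 (Sum.elim x2 x3))‖ < 3 / 2) :
    x1 = x2 ∧ x2 = x3 ∧ ‖B *ᵥ ((fun _ => (1 : ℝ) / 2) - x1)‖ < 3 / 2 := by
  simp only [← Sum.elim_lam_const_lam_const, ← Sum.elim_sub_sub,
    norm_Amat_mulVec_sumElim_lt_iff] at h
  obtain ⟨hB, h₁, h₂, h₃⟩ := h
  have hpos : (0 : ℝ) < 3 / 2 := by norm_num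
  have hx (i : Fin n) : x1 i = x2 i ∧ x2 i = x3 i :=
    eq_and_eq_of_abs_signed_sums_half_sub_lt (hx1 i) (hx2 i) (hx3 i)
      ((pi_norm_lt_iff hpos).mp h₁ i) ((pi_norm_lt_iff hpos).mp h₂ i)
      ((pi_norm_lt_iff hpos).mp h₃ i)
  obtain rfl : x1 = x2 := funext fun i => (hx i).1
  obtain rfl : x1 = x3 := funext fun i => (hx i).2
  refine ⟨rfl, rfl, ?_⟩
  convert hB using 2
  rw [← mulVec_smul]
  congr 1
  module

/-- Soundness step: a `0-1` vector `x = (x¹,x²,x³)` with `‖A((1/2)·1 - x)‖_∞ < 3/2`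
must have `x¹ = x² = x³` and `‖B((1/2)·1 - x¹)‖_∞ < 3/2`. -/
theorem reduction_soundness_step {m n : ℕ} (B : Matrix (Fin m) (Fin n) ℝ)
    (x1 x2 x3 : Fin n → ℝ)
    (hx : ∀ i, (x1 i = 0 ∨ x1 i = 1) ∧ (x2 i = 0 ∨ x2 i = 1) ∧ (x3 i = 0 ∨ x3 i = 1))
    (h : ‖(Amat B).mulVec
        ((fun _ => (1 : ℝ) / 2) - Sum.elim x1 (Sum.elim x2 x3))‖ < 3 / 2) :
    x1 = x2 ∧ x2 = x3 ∧ ‖B.mulVec ((fun _ => (1 : ℝ) / 2) - x1)‖ < 3 / 2 := by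
  have mem_range_intCast {t : ℝ} (ht : t = 0 ∨ t = 1) : t ∈ Set.range (Int.cast : ℤ → ℝ) :=
    ht.elim (fun h0 => ⟨0, by simp [h0]⟩) (fun h1 => ⟨1, by simp [h1]⟩)
  exact reduction_soundness_step_general B (fun i => mem_range_intCast (hx i).1)
    (fun i => mem_range_intCast (hx i).2.1) (fun i => mem_range_intCast (hx i).2.2) h
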